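/- arXiv:1910.11287 — 2 statements merged into one kernel-verified Lean document; each statement's English description precedes it below -/
import Mathlib

section
/- Let 𝔤 be a finite-dimensional real Lie algebra with solvable radical 𝔯 (its maximal solvable ideal), and let 𝔨 ⊆ 𝔯 be a Lie subalgebra such that 𝔤, viewed as a 𝔨-module under the adjoint action, is semisimple (every 𝔨-submodule of 𝔤 admits a complementary 𝔨-submodule). Then there exists a Lie subalgebra 𝔰 of 𝔤 such that 𝔰 is a semisimple Lie algebra, 𝔤 = 𝔯 + 𝔰 with 𝔯 ∩ 𝔰 = (0), and ⁅𝔰, 𝔨⁆ = (0). -/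
namespace LeviAux

attribute [local instance] LieRing.ofAssociativeRing

open LieAlgebra Module

lemma exists_lift {K L Q A : Type*} [Field K] [LieRing L] [LieAlgebra K L] [LieRing Q]
    [LieAlgebra K Q] [LieRing A] [LieAlgebra K A] (f : L →ₗ⁅K⁆ Q) (hf : Function.Surjective f)
    (g : L →ₗ⁅K⁆ A) (h : ∀ x, f x = 0 → g x = 0) :
    ∃ g' : Q →ₗ⁅K⁆ A, ∀ x, g' (f x) = g x := by
  have key : ∀ x y, f x = f y → g x = g y := by
    intro x y hxy
    have := h (x - y) (by rw [map_sub, hxy, sub_self])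
    rwa [map_sub, sub_eq_zero] at this
  have hs := Function.rightInverse_surjInv hf
  refine ⟨{ toFun := fun q => g (Function.surjInv hf q)
            map_add' := ?_
            map_smul' := ?_
            map_lie' := ?_ }, ?_⟩
  · intro a b
    rw [← map_add]; apply key; rw [map_add, hs, hs, hs]
  · intro c a
    rw [RingHom.id_apply, ← map_smul]; apply key; rw [map_smul, hs, hs]
  · intro a b
    rw [← LieHom.map_lie]; apply key; rw [LieHom.map_lie, hs, hs, hs]
  · intro x
    apply key
    exact hs _

lemma htr_of_surjective {K L A : Type*} [Field K] [CharZero K] [LieRing L] [LieAlgebra K L]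
    [FiniteDimensional K L] [LieRing A] [LieAlgebra K A] [HasTrivialRadical K L]
    (f : L →ₗ⁅K⁆ A) (hf : Function.Surjective f) : HasTrivialRadical K A := by
  rw [hasTrivialRadical_iff_no_solvable_ideals]
  intro J hJ
  have hc := LieIdeal.isCompl_killingCompl (K := K) f.ker
  set C := LieIdeal.killingCompl K L f.ker
  set P : LieIdeal K L := J.comap f ⊓ C
  have hPJ : ∀ x ∈ P, f x ∈ J := fun x hx => by
    have := hx.1
    exact LieIdeal.mem_comap.mp this
  have hP : P = ⊥ := by
    apply (hasTrivialRadical_iff_no_solvable_ideals K L).mp inferInstance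
    let g : P →ₗ⁅K⁆ J :=
      { toFun := fun x => ⟨f x, hPJ x x.2⟩
        map_add' := fun a b => by ext; simp
        map_smul' := fun a b => by ext; simp
        map_lie' := fun {a b} => by ext; simp }
    apply Function.Injective.lieAlgebra_isSolvable (f := g)
    rw [injective_iff_map_eq_zero]
    intro x hx
    have hx0 : f x = 0 := congrArg Subtype.val hx
    have : (x : L) ∈ f.ker ⊓ C := ⟨by simpa using hx0, x.2.2⟩
    rw [hc.inf_eq_bot] at this
    ext; simpa using this
  rw [LieSubmodule.eq_bot_iff]
  intro j hj
  obtain ⟨x, rfl⟩ := hf j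
  have hx : x ∈ f.ker ⊔ C := by rw [hc.sup_eq_top]; trivial
  obtain ⟨k, hk, c, hcC, rfl⟩ := LieSubmodule.mem_sup _ _ _ |>.mp hx
  have hk0 : f k = 0 := by simpa using hk
  rw [map_add, hk0, zero_add] at hj ⊢
  have : c ∈ P := ⟨LieIdeal.mem_comap.mpr hj, hcC⟩
  rw [hP] at this
  rw [(LieSubmodule.mem_bot _).mp this, map_zero]

lemma solvable_comap {K L A : Type*} [Field K] [LieRing L] [LieAlgebra K L]
    [LieRing A] [LieAlgebra K A] (f : L →ₗ⁅K⁆ A) (I : LieIdeal K L) [hI : LieAlgebra.IsSolvable I]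
    (hker : ∀ x, f x = 0 → x ∈ I)
    (J : LieIdeal K A) [hJ : LieAlgebra.IsSolvable J] : LieAlgebra.IsSolvable (J.comap f) := by
  obtain ⟨k, hk⟩ := LieAlgebra.IsSolvable.solvable K J
  obtain ⟨l, hl⟩ := LieAlgebra.IsSolvable.solvable K I
  rw [LieIdeal.derivedSeries_eq_bot_iff] at hk hl
  have h1 : ∀ n, (derivedSeriesOfIdeal K L n (J.comap f)).map f ≤ derivedSeriesOfIdeal K A n J := by
    intro n
    induction n with
    | zero => simpa using LieIdeal.map_comap_le
    | succ n ih =>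
      rw [derivedSeriesOfIdeal_succ, derivedSeriesOfIdeal_succ]
      exact (LieIdeal.map_bracket_le f).trans (LieSubmodule.mono_lie ih ih)
  apply LieAlgebra.IsSolvable.mk (R := K) (k := l + k)
  rw [LieIdeal.derivedSeries_eq_bot_iff, derivedSeriesOfIdeal_add, eq_bot_iff, ← hl]
  apply derivedSeriesOfIdeal_mono
  intro x hx
  apply hker
  have := h1 k (LieIdeal.mem_map hx)
  rw [hk] at this
  simpa using this

lemma htr_quot_radical {K L : Type*} [Field K] [LieRing L] [LieAlgebra K L]
    [FiniteDimensional K L] : HasTrivialRadical K (L ⧸ radical K L) := by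
  rw [hasTrivialRadical_iff_no_solvable_ideals]
  intro J hJ
  let f : L →ₗ⁅K⁆ (L ⧸ radical K L) :=
    { (LieSubmodule.Quotient.mk' (radical K L) : L →ₗ[K] L ⧸ radical K L) with
      map_lie' := fun {x y} => LieSubmodule.Quotient.mk_bracket (radical K L) x y }
  have hs := solvable_comap f (radical K L)
    (fun x hx => LieSubmodule.Quotient.mk_eq_zero'.mp hx) J
  rw [LieIdeal.solvable_iff_le_radical] at hs
  rw [LieSubmodule.eq_bot_iff]
  intro j hj
  obtain ⟨x, rfl⟩ := LieSubmodule.Quotient.surjective_mk' _ j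
  rw [LieSubmodule.Quotient.mk_eq_zero]
  apply hs
  exact LieIdeal.mem_comap.mpr hj
lemma traceForm_nondeg {K A M : Type*} [Field K] [CharZero K] [LieRing A] [LieAlgebra K A]
    [FiniteDimensional K A] [HasTrivialRadical K A] [AddCommGroup M] [Module K M]
    [LieRingModule A M] [LieModule K A M] [FiniteDimensional K M] [LieModule.IsFaithful K A M] :
    (LieModule.traceForm K A M).Nondegenerate := by
  set R : LieIdeal K A := LieAlgebra.InvariantForm.orthogonal (LieModule.traceForm K A M)
    (LieModule.traceForm_lieInvariant K A M) ⊤ with hRdef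
  have hR : ∀ x, x ∈ R ↔ ∀ y, LieModule.traceForm K A M y x = 0 := by
    intro x
    simp [hRdef, LieAlgebra.InvariantForm.mem_orthogonal]
  have hRbot : R = ⊥ := by
    apply (hasTrivialRadical_iff_no_solvable_ideals K A).mp inferInstance
    have tf : LieModule.traceForm K R M = 0 := by
      ext x y
      exact (hR y).mp y.2 x
    have hnil := LieModule.isNilpotent_derivedSeries_of_traceForm_eq_zero tf
    rw [LieModule.isNilpotent_iff_forall' (R := K)] at hnil
    have : LieRing.IsNilpotent (derivedSeries K R 1) := by
      rw [LieAlgebra.isNilpotent_iff_forall (R := K)]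
      intro x
      set φ := LieModule.toEnd K (derivedSeries K R 1) M
      obtain ⟨n, hn⟩ := LieAlgebra.ad_nilpotent_of_nilpotent (R := K) (hnil x)
      have hcomm_ad : ∀ k y, φ (((ad K (derivedSeries K R 1) x) ^ k) y) =
          ((ad K (End K M) (φ x)) ^ k) (φ y) := by
        intro k
        induction k with
        | zero => intro y; simp
        | succ k ih =>
          intro y
          rw [pow_succ', pow_succ', Module.End.mul_apply, Module.End.mul_apply, ← ih, ad_apply,
            ad_apply, LieHom.map_lie]
      refine ⟨n, ?_⟩
      ext y
      have h0 := hcomm_ad n y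
      rw [hn, LinearMap.zero_apply] at h0
      have hz : ((((ad K (derivedSeries K R 1) x) ^ n) y : R) : A) = 0 := by
        apply (LieModule.isFaithful_iff' K A M).mp inferInstance
        intro m
        exact LinearMap.congr_fun h0 m
      simpa using hz
    obtain ⟨k, hk⟩ := LieAlgebra.IsSolvable.solvable K (derivedSeries K R 1)
    rw [LieIdeal.derivedSeries_eq_bot_iff] at hk
    apply LieAlgebra.IsSolvable.mk (R := K) (k := k + 1)
    rw [derivedSeries_def, derivedSeriesOfIdeal_add]
    exact hk
  have hz : ∀ x, (∀ y, LieModule.traceForm K A M y x = 0) → x = 0 := by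
    intro x hx
    have := (hR x).mpr hx
    rw [hRbot] at this
    simpa using this
  refine ⟨fun x hx => hz x fun y => ?_, fun x hx => hz x hx⟩
  rw [LieModule.traceForm_comm]; exact hx y

lemma exists_casimir (K A M : Type*) [Field K] [CharZero K] [LieRing A] [LieAlgebra K A]
    [FiniteDimensional K A] [HasTrivialRadical K A] [AddCommGroup M] [Module K M]
    [LieRingModule A M] [LieModule K A M] [FiniteDimensional K M] [LieModule.IsFaithful K A M] :
    ∃ Ω : End K M, (∀ (a : A) (m : M), ⁅a, Ω m⁆ = Ω ⁅a, m⁆) ∧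
      (∀ N : Submodule K M, (∀ (a : A) (m : M), ⁅a, m⁆ ∈ N) → ∀ m, Ω m ∈ N) ∧
      LinearMap.trace K M Ω = finrank K A := by
  classical
  set B := LieModule.traceForm K A M with hB
  have hnd : B.Nondegenerate := traceForm_nondeg
  have hsymm : B.IsSymm := ⟨LieModule.traceForm_comm K A M⟩
  let b := finBasis K A
  let b' := B.dualBasis hnd b
  let φ := LieModule.toEnd K A M
  refine ⟨∑ i, φ (b i) * φ (b' i), ?_, ?_, ?_⟩
  · intro x m
    -- expansions
    have e1 : ∀ z : A, z = ∑ j, B z (b' j) • b j := by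
      intro z
      conv_lhs => rw [← b.sum_repr z]
      refine Finset.sum_congr rfl fun j _ => ?_
      congr 1
      have := LinearMap.BilinForm.dualBasis_repr_apply hnd (B.dualBasis hnd b) z j
      rw [LinearMap.BilinForm.dualBasis_dualBasis hnd hsymm] at this
      exact this
    have e2 : ∀ z : A, z = ∑ j, B z (b j) • b' j := by
      intro z
      conv_lhs => rw [← b'.sum_repr z]
      refine Finset.sum_congr rfl fun j _ => ?_
      congr 1
      exact LinearMap.BilinForm.dualBasis_repr_apply hnd b z j
    have e3 : ∀ i j, B ⁅x, b' i⁆ (b j) = - B ⁅x, b j⁆ (b' i) := by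
      intro i j
      rw [← lie_skew x, map_neg, LinearMap.neg_apply, LieModule.traceForm_apply_lie_apply,
        LieModule.traceForm_comm]
    have hmain : ∑ i, (⁅⁅x, b i⁆, ⁅b' i, m⁆⁆ + ⁅b i, ⁅⁅x, b' i⁆, m⁆⁆) = 0 := by
      rw [Finset.sum_add_distrib]
      have s1 : ∑ i, ⁅⁅x, b i⁆, ⁅b' i, m⁆⁆ = ∑ i, ∑ j, B ⁅x, b i⁆ (b' j) • ⁅b j, ⁅b' i, m⁆⁆ := by
        refine Finset.sum_congr rfl fun i _ => ?_
        conv_lhs => rw [e1 ⁅x, b i⁆]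
        simp [sum_lie]
      have s2 : ∑ i, ⁅b i, ⁅⁅x, b' i⁆, m⁆⁆ =
          ∑ i, ∑ j, - (B ⁅x, b j⁆ (b' i) • ⁅b i, ⁅b' j, m⁆⁆) := by
        refine Finset.sum_congr rfl fun i _ => ?_
        conv_lhs => rw [e2 ⁅x, b' i⁆]
        simp [sum_lie, lie_sum, e3]
      rw [s1, s2, Finset.sum_comm, ← Finset.sum_add_distrib]
      simp
    simp only [LinearMap.sum_apply, Module.End.mul_apply]
    change ⁅x, ∑ i, ⁅b i, ⁅b' i, m⁆⁆⁆ = ∑ i, ⁅b i, ⁅b' i, ⁅x, m⁆⁆⁆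
    rw [← sub_eq_zero, lie_sum, ← Finset.sum_sub_distrib, ← hmain]
    refine Finset.sum_congr rfl fun i _ => ?_
    rw [leibniz_lie x (b i), leibniz_lie x (b' i), lie_add]
    abel
  · intro N hN m
    simp only [LinearMap.sum_apply, Module.End.mul_apply]
    exact Submodule.sum_mem _ fun i _ => hN _ _
  · rw [map_sum]
    have : ∀ i, LinearMap.trace K M (φ (b i) * φ (b' i)) = 1 := by
      intro i
      change B (b i) (b' i) = 1
      rw [LinearMap.BilinForm.apply_dualBasis_right hnd hsymm]; simp
    simp [this]

lemma whitehead {K L Q : Type*} [Field K] [CharZero K] [LieRing L] [LieAlgebra K L]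
    [LieRing Q] [LieAlgebra K Q] [FiniteDimensional K Q] [HasTrivialRadical K Q]
    (f : L →ₗ⁅K⁆ Q) (hf : Function.Surjective f) (n : ℕ) :
    ∀ (M : Type*) [AddCommGroup M] [Module K M] [LieRingModule L M] [LieModule K L M]
      [FiniteDimensional K M] (_ : finrank K M = n) (_ : ∀ x : L, f x = 0 → ∀ m : M, ⁅x, m⁆ = 0)
      (N : Submodule K M) (_ : ∀ (x : L) (m : M), ⁅x, m⁆ ∈ N) (m : M),
      ∃ v ∈ N, ∀ x : L, ⁅x, m - v⁆ = 0 := by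
  induction n using Nat.strong_induction_on with
  | _ n ih =>
  intro M _ _ _ _ _ hn hker N hN m
  obtain ⟨g, hg⟩ := exists_lift f hf (LieModule.toEnd K L M) (fun x hx => by
    ext m; exact hker x hx m)
  have hA : HasTrivialRadical K g.range := htr_of_surjective g.rangeRestrict g.surjective_rangeRestrict
  have hAL : ∀ x : L, LieModule.toEnd K L M x ∈ g.range := fun x => ⟨f x, hg x⟩
  have hLA : ∀ a : g.range, ∃ x : L, ∀ m : M, ⁅a, m⁆ = ⁅x, m⁆ := by
    rintro ⟨_, q, rfl⟩
    obtain ⟨x, rfl⟩ := hf q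
    exact ⟨x, fun m => LinearMap.congr_fun (hg x) m⟩
  by_cases hzero : finrank K g.range = 0
  · refine ⟨0, N.zero_mem, fun x => ?_⟩
    have : Subsingleton g.range := finrank_zero_iff.mp hzero
    have h := Subsingleton.elim (⟨_, hAL x⟩ : g.range) 0
    have h' : LieModule.toEnd K L M x = 0 := congrArg Subtype.val h
    exact LinearMap.congr_fun h' _
  · obtain ⟨Ω, hcomm, hΩN, htr⟩ := exists_casimir K g.range M
    have hcomm' : ∀ (x : L) (m : M), ⁅x, Ω m⁆ = Ω ⁅x, m⁆ := fun x m => hcomm ⟨_, hAL x⟩ m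
    have hΩN' : ∀ m, Ω m ∈ N := hΩN N (fun a m => by
      obtain ⟨x, hx⟩ := hLA a
      rw [hx]; exact hN x m)
    obtain ⟨k, hk⟩ := Filter.eventually_atTop.mp (LinearMap.eventually_isCompl_ker_pow_range_pow Ω)
    have hc := hk (k + 1) (by omega)
    have hpow : ∀ (j : ℕ) (x : L) (m : M), ⁅x, (Ω ^ j) m⁆ = (Ω ^ j) ⁅x, m⁆ := by
      intro j
      induction j with
      | zero => simp
      | succ j ihj =>
        intro x m
        rw [pow_succ', Module.End.mul_apply, Module.End.mul_apply, hcomm', ihj]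
    let M0 : LieSubmodule K L M :=
      { LinearMap.ker (Ω ^ (k + 1)) with
        lie_mem := by
          intro x m hm
          have hm' : (Ω ^ (k + 1)) m = 0 := hm
          change (Ω ^ (k + 1)) ⁅x, m⁆ = 0
          rw [← hpow, hm', lie_zero] }
    have hlt : finrank K M0 < n := by
      rw [← hn]
      apply Submodule.finrank_lt (s := LinearMap.ker (Ω ^ (k + 1)))
      intro htop
      have hnil : IsNilpotent Ω := ⟨k + 1, LinearMap.ker_eq_top.mp htop⟩
      have := (LinearMap.isNilpotent_trace_of_isNilpotent hnil).eq_zero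
      rw [htr] at this
      exact hzero (by exact_mod_cast this)
    obtain ⟨a, ha, c, hcr, rfl⟩ : ∃ a ∈ LinearMap.ker (Ω ^ (k + 1)),
        ∃ c ∈ LinearMap.range (Ω ^ (k + 1)), a + c = m := by
      apply Submodule.mem_sup.mp
      rw [hc.sup_eq_top]; trivial
    have hcN : c ∈ N := by
      obtain ⟨d, rfl⟩ := hcr
      rw [pow_succ', Module.End.mul_apply]
      exact hΩN' _
    obtain ⟨v, hv, hinv⟩ := ih _ hlt M0 rfl (fun x hx m => by
      ext; exact hker x hx m) (N.comap (M0 : Submodule K M).subtype) (fun x m => hN x m) ⟨a, ha⟩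
    refine ⟨v + c, N.add_mem hv hcN, fun x => ?_⟩
    have := congrArg Subtype.val (hinv x)
    have h2 : a + c - (v + c) = a - v := by abel
    rw [h2]
    exact this

lemma exists_phi {K L Q : Type*} [Field K] [CharZero K] [LieRing L] [LieAlgebra K L]
    [FiniteDimensional K L]
    [LieRing Q] [LieAlgebra K Q] [FiniteDimensional K Q] [HasTrivialRadical K Q]
    (f : L →ₗ⁅K⁆ Q) (hf : Function.Surjective f)
    (hab : ∀ x y, f x = 0 → f y = 0 → ⁅x, y⁆ = 0) :
    ∃ φ : L →ₗ[K] L, (∀ y, f (φ y) = 0) ∧ (∀ y, f y = 0 → φ y = y) ∧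
      ∀ x : L, ∃ a : L, f a = 0 ∧ ∀ y, ⁅x, φ y⁆ - φ ⁅x, y⁆ = ⁅a, y⁆ := by
  let W : LieSubmodule K L (L →ₗ[K] L) :=
    { carrier := {φ | (∀ y, f (φ y) = 0) ∧ ∃ c : K, ∀ y, f y = 0 → φ y = c • y}
      add_mem' := by
        rintro a b ⟨ha, c, hc⟩ ⟨hb, d, hd⟩
        refine ⟨fun y => by simp [ha, hb], c + d, fun y hy => ?_⟩
        rw [LinearMap.add_apply, hc y hy, hd y hy, add_smul]
      zero_mem' := ⟨fun y => by simp, 0, fun y _ => by simp⟩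
      smul_mem' := by
        rintro r a ⟨ha, c, hc⟩
        refine ⟨fun y => by simp [ha], r * c, fun y hy => ?_⟩
        rw [LinearMap.smul_apply, hc y hy, mul_smul]
      lie_mem := by
        rintro x a ⟨ha, c, hc⟩
        refine ⟨fun y => by simp [LieHom.lie_apply, ha], 0, fun y hy => ?_⟩
        rw [LieHom.lie_apply, hc y hy, hc ⁅x, y⁆ (by simp [hy])]
        simp }
  have hadW : ∀ a, f a = 0 → (ad K L a : L →ₗ[K] L) ∈ W := fun a ha =>
    ⟨fun y => by simp [ha], 0, fun y hy => by simp [hab a y ha hy]⟩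
  let P : LieSubmodule K L W :=
    { carrier := {φ | ∃ a, f a = 0 ∧ ∀ y, (φ : L →ₗ[K] L) y = ⁅a, y⁆}
      add_mem' := by
        rintro u v ⟨a, ha, hu⟩ ⟨b, hb, hv⟩
        refine ⟨a + b, by simp [ha, hb], fun y => by simp [hu, hv]⟩
      zero_mem' := ⟨0, by simp, fun y => by simp⟩
      smul_mem' := by
        rintro r u ⟨a, ha, hu⟩
        refine ⟨r • a, by simp [ha], fun y => by simp [hu]⟩
      lie_mem := by
        rintro x u ⟨a, ha, hu⟩
        refine ⟨⁅x, a⁆, by simp [ha], fun y => ?_⟩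
        change (⁅x, (u : L →ₗ[K] L)⁆) y = _
        rw [LieHom.lie_apply, hu, hu, lie_lie] }
  let V : Submodule K W :=
    { carrier := {φ | ∀ y, f y = 0 → (φ : L →ₗ[K] L) y = 0}
      add_mem' := by
        rintro u v hu hv y hy
        simp [hu y hy, hv y hy]
      zero_mem' := fun y _ => by simp
      smul_mem' := by
        rintro r u hu y hy
        simp [hu y hy] }
  obtain ⟨p, hp⟩ := (LinearMap.ker (f : L →ₗ[K] Q)).subtype.exists_leftInverse_of_injective
    (Submodule.ker_subtype _)
  have hφ0 : (LinearMap.ker (f : L →ₗ[K] Q)).subtype ∘ₗ p ∈ W := by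
    refine ⟨fun y => (p y).2, 1, fun y hy => ?_⟩
    have := LinearMap.congr_fun hp ⟨y, hy⟩
    rw [one_smul]
    exact congrArg Subtype.val this
  let φ0 : W := ⟨_, hφ0⟩
  let π := LieSubmodule.Quotient.mk' P
  obtain ⟨v, hv, hinv⟩ := whitehead f hf _ (W ⧸ P) rfl (by
      intro x hx m
      obtain ⟨w, rfl⟩ := LieSubmodule.Quotient.surjective_mk' P m
      rw [← LieModuleHom.map_lie, LieSubmodule.Quotient.mk_eq_zero]
      obtain ⟨c, hc⟩ := w.2.2
      refine ⟨-(c • x), by simp [hx], fun y => ?_⟩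
      change (⁅x, (w : L →ₗ[K] L)⁆) y = _
      rw [LieHom.lie_apply, hab x _ hx (w.2.1 y), hc ⁅x, y⁆ (by simp [hx])]
      simp) (V.map (π : W →ₗ[K] W ⧸ P)) (by
      intro x m
      obtain ⟨w, rfl⟩ := LieSubmodule.Quotient.surjective_mk' P m
      rw [← LieModuleHom.map_lie]
      refine ⟨⁅x, w⁆, fun y hy => ?_, rfl⟩
      obtain ⟨c, hc⟩ := w.2.2
      change (⁅x, (w : L →ₗ[K] L)⁆) y = _
      rw [LieHom.lie_apply, hc y hy, hc ⁅x, y⁆ (by simp [hy])]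
      simp) (π φ0)
  obtain ⟨v, hv, rfl⟩ := hv
  refine ⟨((φ0 - v : W) : L →ₗ[K] L), (φ0 - v).2.1, fun y hy => ?_, fun x => ?_⟩
  · change (φ0 : L →ₗ[K] L) y - (v : L →ₗ[K] L) y = y
    rw [hv y hy, sub_zero]
    exact congrArg Subtype.val (LinearMap.congr_fun hp ⟨y, hy⟩)
  · have h := hinv x
    change ⁅x, π φ0 - π v⁆ = 0 at h
    rw [← map_sub, ← LieModuleHom.map_lie, LieSubmodule.Quotient.mk_eq_zero] at h
    obtain ⟨a, ha, h⟩ := h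
    exact ⟨a, ha, fun y => h y⟩

lemma solvable_of_sub {K L S : Type*} [Field K] [LieRing L] [LieAlgebra K L]
    [LieRing S] [LieAlgebra K S] (i : S →ₗ⁅K⁆ L) (hi : Function.Injective i)
    (I : LieIdeal K L) [LieAlgebra.IsSolvable I] (J : LieIdeal K S) (h : ∀ x ∈ J, i x ∈ I) :
    LieAlgebra.IsSolvable J := by
  let g : J →ₗ⁅K⁆ I :=
    { toFun := fun x => ⟨i x, h x x.2⟩
      map_add' := fun a b => by ext; simp
      map_smul' := fun a b => by ext; simp
      map_lie' := fun {a b} => by ext; simp }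
  apply Function.Injective.lieAlgebra_isSolvable (f := g)
  intro x y hxy
  exact Subtype.ext (hi (congrArg Subtype.val hxy))

lemma levi_section {K Q : Type*} [Field K] [CharZero K]
    [LieRing Q] [LieAlgebra K Q] [FiniteDimensional K Q] [HasTrivialRadical K Q] (n : ℕ) :
    ∀ (L : Type*) [LieRing L] [LieAlgebra K L] [FiniteDimensional K L] (_ : finrank K L = n)
      (f : L →ₗ⁅K⁆ Q) (_ : Function.Surjective f) (_ : LieAlgebra.IsSolvable f.ker),
      ∃ g : Q →ₗ⁅K⁆ L, ∀ q, f (g q) = q := by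
  induction n using Nat.strong_induction_on with
  | _ n ih =>
  intro L _ _ _ hn f hf hsol
  -- reduction to a proper subalgebra
  have red : ∀ S : LieSubalgebra K L, S ≠ ⊤ → (∀ q, ∃ x ∈ S, f x = q) →
      ∃ g : Q →ₗ⁅K⁆ L, ∀ q, f (g q) = q := by
    intro S hS hsurj
    have hlt : finrank K S < n := by
      rw [← hn]
      apply Submodule.finrank_lt (s := S.toSubmodule)
      intro h
      apply hS
      rw [← LieSubalgebra.toSubmodule_inj, h]; rfl
    obtain ⟨g, hg⟩ := ih _ hlt S rfl (f.comp S.incl)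
      (fun q => by obtain ⟨x, hx, rfl⟩ := hsurj q; exact ⟨⟨x, hx⟩, rfl⟩)
      (solvable_of_sub S.incl Subtype.val_injective f.ker _ (fun x hx => by
        rw [LieHom.mem_ker] at hx ⊢; exact hx))
    exact ⟨S.incl.comp g, hg⟩
  by_cases hab : ∀ x y, f x = 0 → f y = 0 → ⁅x, y⁆ = 0
  · obtain ⟨φ, h1, h2, h3⟩ := exists_phi f hf hab
    by_cases hcent : ∀ x y : L, f x = 0 → ⁅x, y⁆ = 0
    · have heq : ∀ x y : L, φ ⁅x, y⁆ = ⁅x, φ y⁆ := by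
        intro x y
        obtain ⟨a, ha, h⟩ := h3 x
        have := h y
        rw [hcent a y ha, sub_eq_zero] at this
        exact this.symm
      have hcent' : ∀ x y : L, f y = 0 → ⁅x, y⁆ = 0 := fun x y hy => by
        rw [← lie_skew, hcent y x hy, neg_zero]
      let h : L →ₗ⁅K⁆ L :=
        { (LinearMap.id - φ : L →ₗ[K] L) with
          map_lie' := by
            intro x y
            change ⁅x, y⁆ - φ ⁅x, y⁆ = ⁅x - φ x, y - φ y⁆
            rw [heq, hcent' x _ (h1 y), sub_lie, hcent _ _ (h1 x), lie_sub, hcent' x _ (h1 y), sub_zero, sub_zero] }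
      obtain ⟨g, hg⟩ := exists_lift f hf h (fun x hx => by
        change x - φ x = 0
        rw [h2 x hx, sub_self])
      refine ⟨g, fun q => ?_⟩
      obtain ⟨x, rfl⟩ := hf q
      rw [hg]
      change f (x - φ x) = f x
      rw [map_sub, h1, sub_zero]
    · push Not at hcent
      obtain ⟨z, w, hz, hzw⟩ := hcent
      let S : LieSubalgebra K L :=
        { carrier := {x | ∀ y, ⁅x, φ y⁆ = φ ⁅x, y⁆}
          add_mem' := fun {a b} ha hb y => by rw [add_lie, add_lie, map_add, ha y, hb y]
          zero_mem' := fun y => by simp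
          smul_mem' := fun c a ha y => by rw [smul_lie, smul_lie, map_smul, ha y]
          lie_mem' := fun {a b} ha hb y => by
            rw [lie_lie, lie_lie, map_sub, hb y, ha ⁅b, y⁆, ha y, hb ⁅a, y⁆] }
      apply red S
      · intro htop
        have hzS : z ∈ S := by rw [htop]; trivial
        have := hzS w
        rw [hab z _ hz (h1 w), h2 _ (by simp [hz])] at this
        exact hzw this.symm
      · intro q
        obtain ⟨x, rfl⟩ := hf q
        obtain ⟨a, ha, h⟩ := h3 x
        refine ⟨x + a, fun y => ?_, by simp [ha]⟩
        rw [add_lie, hab a _ ha (h1 y), add_lie, map_add, h2 ⁅a, y⁆ (by simp [ha]), ← h y]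
        abel
  · push Not at hab
    obtain ⟨z, w, hz, hw, hzw⟩ := hab
    set I : LieIdeal K L := f.ker with hI
    set I' : LieIdeal K L := ⁅I, I⁆ with hI'
    have hI'I : I' ≤ I := LieSubmodule.lie_le_left I I
    have hzI : z ∈ I := by rw [hI, LieHom.mem_ker]; exact hz
    have hwI : w ∈ I := by rw [hI, LieHom.mem_ker]; exact hw
    have hzw' : ⁅z, w⁆ ∈ I' := LieSubmodule.lie_mem_lie hzI hwI
    have hne : I' ≠ I := by
      intro heq
      obtain ⟨k, hk⟩ := LieAlgebra.IsSolvable.solvable K I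
      rw [LieIdeal.derivedSeries_eq_bot_iff] at hk
      have : ∀ j, derivedSeriesOfIdeal K L j I = I := by
        intro j
        induction j with
        | zero => rfl
        | succ j ihj => rw [derivedSeriesOfIdeal_succ, ihj]; exact heq
      rw [this] at hk
      rw [heq, hk] at hzw'
      exact hzw (by simpa using hzw')
    let π : L →ₗ⁅K⁆ (L ⧸ I') :=
      { (LieSubmodule.Quotient.mk' I' : L →ₗ[K] L ⧸ I') with
        map_lie' := fun {x y} => LieSubmodule.Quotient.mk_bracket I' x y }
    have hπ : Function.Surjective π := LieSubmodule.Quotient.surjective_mk' I'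
    have hπ0 : ∀ x, π x = 0 ↔ x ∈ I' := fun x => LieSubmodule.Quotient.mk_eq_zero'
    have hfI' : ∀ x ∈ I', f x = 0 := fun x hx => by
      have := hI'I hx
      rwa [hI, LieHom.mem_ker] at this
    obtain ⟨fb, hfb⟩ := exists_lift π hπ f (fun x hx => hfI' x ((hπ0 x).mp hx))
    have hlt : finrank K (L ⧸ I') < n := by
      rw [← hn]
      have hadd := Submodule.finrank_quotient_add_finrank I'.toSubmodule
      change finrank K (L ⧸ I'.toSubmodule) < finrank K L
      suffices 0 < finrank K I'.toSubmodule by omega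
      rw [Nat.pos_iff_ne_zero]
      intro hbot
      rw [Submodule.finrank_eq_zero] at hbot
      have : ⁅z, w⁆ ∈ I'.toSubmodule := hzw'
      rw [hbot] at this
      exact hzw (by simpa using this)
    have hfbs : Function.Surjective fb := fun q => by
      obtain ⟨x, rfl⟩ := hf q
      exact ⟨π x, hfb x⟩
    have hsolb : LieAlgebra.IsSolvable fb.ker := by
      have hmap : ∀ x ∈ I, π x ∈ fb.ker := fun x hx => by
        rw [LieHom.mem_ker, hfb]
        rwa [hI, LieHom.mem_ker] at hx
      let r : I →ₗ⁅K⁆ fb.ker :=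
        { toFun := fun x => ⟨π x, hmap x x.2⟩
          map_add' := fun a b => by ext; simp
          map_smul' := fun a b => by ext; simp
          map_lie' := fun {a b} => by ext; simp }
      apply Function.Surjective.lieAlgebra_isSolvable (f := r)
      rintro ⟨y, hy⟩
      obtain ⟨x, rfl⟩ := hπ y
      rw [LieHom.mem_ker, hfb] at hy
      exact ⟨⟨x, by rw [hI, LieHom.mem_ker]; exact hy⟩, rfl⟩
    obtain ⟨g1, hg1⟩ := ih _ hlt (L ⧸ I') rfl fb hfbs hsolb
    apply red (g1.range.comap π)
    · intro htop
      apply hne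
      apply le_antisymm hI'I
      intro x hx
      have hxS : x ∈ g1.range.comap π := by rw [htop]; trivial
      obtain ⟨q, hq⟩ : ∃ q, g1 q = π x := hxS
      rw [hI, LieHom.mem_ker] at hx
      rw [← hπ0, ← hq]
      have : q = 0 := by rw [← hg1 q, hq, hfb, hx]
      rw [this, map_zero]
    · intro q
      obtain ⟨x, hx⟩ := hπ (g1 q)
      exact ⟨x, ⟨q, hx.symm⟩, by rw [← hfb, hx, hg1]⟩

end LeviAux

/-- Let `𝔤` be a finite-dimensional real Lie algebra with solvable radical
`𝔯`, and let `𝔨 ⊆ 𝔯` be a subalgebra such that `𝔤` is a semisimple `𝔨`-module under the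
adjoint action.  Then there is a Levi subalgebra `𝔰` of `𝔤` (a semisimple subalgebra with
`𝔤 = 𝔯 ⊕ 𝔰` as vector spaces) which centralizes `𝔨`. -/
theorem levi_subalgebra_centralizing_compact_part
    (𝔤 : Type*) [LieRing 𝔤] [LieAlgebra ℝ 𝔤] [FiniteDimensional ℝ 𝔤]
    (𝔨 : LieSubalgebra ℝ 𝔤)
    (h𝔨 : ∀ x ∈ 𝔨, x ∈ LieAlgebra.radical ℝ 𝔤)
    (hss : ∀ N : LieSubmodule ℝ 𝔨 𝔤, ∃ N' : LieSubmodule ℝ 𝔨 𝔤, IsCompl N N') :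
    ∃ 𝔰 : LieSubalgebra ℝ 𝔤, LieAlgebra.IsSemisimple ℝ 𝔰 ∧
      ((LieAlgebra.radical ℝ 𝔤 : Submodule ℝ 𝔤) ⊔ (𝔰 : Submodule ℝ 𝔤) = ⊤) ∧
      ((LieAlgebra.radical ℝ 𝔤 : Submodule ℝ 𝔤) ⊓ (𝔰 : Submodule ℝ 𝔤) = ⊥) ∧
      ∀ x ∈ 𝔰, ∀ y ∈ 𝔨, ⁅x, y⁆ = 0 := by
  set R := LieAlgebra.radical ℝ 𝔤 with hR
  let Z : LieSubalgebra ℝ 𝔤 :=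
    { carrier := {x | ∀ y ∈ 𝔨, ⁅x, y⁆ = 0}
      add_mem' := fun {a b} ha hb y hy => by rw [add_lie, ha y hy, hb y hy, add_zero]
      zero_mem' := fun y _ => by simp
      smul_mem' := fun c a ha y hy => by rw [smul_lie, ha y hy, smul_zero]
      lie_mem' := fun {a b} ha hb y hy => by rw [lie_lie, hb y hy, ha y hy]; simp }
  -- the complement of the radical lies in the centralizer
  let N : LieSubmodule ℝ 𝔨 𝔤 :=
    { R.toSubmodule with
      lie_mem := fun {x m} hm => R.lie_mem (x := (x : 𝔤)) hm }
  obtain ⟨N', hN'⟩ := hss N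
  have hN'Z : ∀ v ∈ N', v ∈ Z := by
    intro v hv y hy
    have h1 : ⁅(⟨y, hy⟩ : 𝔨), v⁆ ∈ N' := N'.lie_mem hv
    have h2 : ⁅y, v⁆ ∈ R := lie_mem_left ℝ 𝔤 R y v (h𝔨 y hy)
    have h3 : ⁅y, v⁆ ∈ N ⊓ N' := ⟨h2, h1⟩
    rw [hN'.inf_eq_bot] at h3
    rw [← lie_skew, (LieSubmodule.mem_bot _).mp h3, neg_zero]
  let π : 𝔤 →ₗ⁅ℝ⁆ (𝔤 ⧸ R) :=
    { (LieSubmodule.Quotient.mk' R : 𝔤 →ₗ[ℝ] 𝔤 ⧸ R) with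
      map_lie' := fun {x y} => LieSubmodule.Quotient.mk_bracket R x y }
  have hπ : Function.Surjective π := LieSubmodule.Quotient.surjective_mk' R
  have hπ0 : ∀ x, π x = 0 ↔ x ∈ R := fun x => LieSubmodule.Quotient.mk_eq_zero'
  have hQ : LieAlgebra.HasTrivialRadical ℝ (𝔤 ⧸ R) := LeviAux.htr_quot_radical
  have hfd : FiniteDimensional ℝ (𝔤 ⧸ R) :=
    inferInstanceAs (FiniteDimensional ℝ (𝔤 ⧸ R.toSubmodule))
  obtain ⟨g, hg⟩ := LeviAux.levi_section _ Z rfl (π.comp Z.incl)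
    (fun q => by
      obtain ⟨x, rfl⟩ := hπ q
      have hx : x ∈ N ⊔ N' := by rw [hN'.sup_eq_top]; trivial
      obtain ⟨a, ha, b, hb, rfl⟩ := (LieSubmodule.mem_sup _ _ _).mp hx
      refine ⟨⟨b, hN'Z b hb⟩, ?_⟩
      change π b = π (a + b)
      rw [map_add, (hπ0 a).mpr ha, zero_add])
    (LeviAux.solvable_of_sub Z.incl Subtype.val_injective R _ (fun x hx => by
      rw [LieHom.mem_ker] at hx
      exact (hπ0 _).mp hx))
  let G : (𝔤 ⧸ R) →ₗ⁅ℝ⁆ 𝔤 := Z.incl.comp g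
  have hG : ∀ q, π (G q) = q := hg
  refine ⟨G.range, ?_, ?_, ?_, ?_⟩
  · have : LieAlgebra.HasTrivialRadical ℝ G.range :=
      LeviAux.htr_of_surjective G.rangeRestrict G.surjective_rangeRestrict
    infer_instance
  · rw [eq_top_iff]
    intro x _
    refine Submodule.mem_sup.mpr ⟨x - G (π x), ?_, G (π x), ⟨π x, rfl⟩, by abel⟩
    exact (hπ0 _).mp (by rw [map_sub, hG, sub_self])
  · rw [eq_bot_iff]
    rintro x ⟨hx, q, hq⟩
    have hq : G q = x := hq
    have h0 : π x = 0 := (hπ0 x).mpr hx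
    rw [← hq, hG] at h0
    rw [Submodule.mem_bot, ← hq, h0, map_zero]
  · rintro x ⟨q, rfl⟩ y hy
    exact (g q).2 y hy
end

section
/- Let V be a finite-dimensional real vector space, let G ⊆ GL(V) be a subgroup which is a definable subset (in an o-minimal expansion of the real ordered field) of the space End(V) of linear endomorphisms, and let F be a finite central subgroup of G. Then there exist a finite-dimensional real vector space W and a continuous group homomorphism σ : G → GL(W), definable in the same structure, whose kernel is exactly F. In particular, the quotient G/F is topologically isomorphic to the definably linear group σ(G). -/
open FirstOrder

/-- A set of reals is a finite union of singletons and open intervals (possibly unbounded). -/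
def IsFiniteUnionOfPointsAndIntervals (s : Set ℝ) : Prop :=
  ∃ (k : ℕ) (f : Fin k → Set ℝ),
    (∀ i, (∃ a, f i = {a}) ∨ (∃ a b, f i = Set.Ioo a b) ∨
      (∃ a, f i = Set.Iio a) ∨ (∃ a, f i = Set.Ioi a) ∨ f i = Set.univ) ∧
    s = ⋃ i, f i

/-- An o-minimal expansion of the real ordered field: a first-order language together with
an interpretation on `ℝ` in which the graphs of addition and multiplication and the order
relation are definable without parameters, and every subset of `ℝ` definable with parameters
is a finite union of singletons and open intervals. -/
structure OMinimalRealExpansion : Type 1 where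
  L : FirstOrder.Language.{0, 0}
  str : L.Structure ℝ
  definable_add : @Set.Definable ℝ (∅ : Set ℝ) L str _ {x : Fin 3 → ℝ | x 0 + x 1 = x 2}
  definable_mul : @Set.Definable ℝ (∅ : Set ℝ) L str _ {x : Fin 3 → ℝ | x 0 * x 1 = x 2}
  definable_lt : @Set.Definable ℝ (∅ : Set ℝ) L str _ {x : Fin 2 → ℝ | x 0 < x 1}
  o_minimal : ∀ s : Set ℝ,
    @Set.Definable ℝ (Set.univ : Set ℝ) L str _ {x : Fin 1 → ℝ | x 0 ∈ s} →
    IsFiniteUnionOfPointsAndIntervals s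

/-- `S.DefSet s` : the set `s` is definable with parameters in the o-minimal structure `S`. -/
def OMinimalRealExpansion.DefSet (S : OMinimalRealExpansion) {α : Type} (s : Set (α → ℝ)) :
    Prop :=
  @Set.Definable ℝ (Set.univ : Set ℝ) S.L S.str α s

/-- A definable group in an o-minimal expansion of the reals: a definable subset of `ℝⁿ`
together with a group structure whose multiplication has definable graph.  It is regarded as a
topological group with the subspace topology from `ℝⁿ`. -/
def IsDefinableGroup (S : OMinimalRealExpansion) {n : ℕ} (c : Set (Fin n → ℝ)) [Group c] :
    Prop :=
  S.DefSet {x : Fin n → ℝ | x ∈ c} ∧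
  S.DefSet {x : Fin 3 × Fin n → ℝ | ∃ a b : c,
    ((a : Fin n → ℝ) = fun j => x (0, j)) ∧ ((b : Fin n → ℝ) = fun j => x (1, j)) ∧
    ((↑(a * b) : Fin n → ℝ) = fun j => x (2, j))}

/-- A topological group (in particular, a Lie group) is Lie-isomorphic to a definable group if
there is a group isomorphism with a definable group in some o-minimal expansion of the real
ordered field which is also a homeomorphism. -/
def IsLieIsomorphicToDefinableGroup (G : Type*) [Group G] [TopologicalSpace G] : Prop :=
  ∃ (S : OMinimalRealExpansion) (n : ℕ) (c : Set (Fin n → ℝ)) (grp : Group c),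
    letI := grp
    IsDefinableGroup S c ∧ ∃ e : G ≃* c, Continuous e ∧ Continuous e.symm

/-- A subgroup of `GL_m(ℝ)` which is a definable subset of the matrix space `M_m(ℝ)` in the
o-minimal structure `S`. -/
def IsDefinableSubgroupOfGL (S : OMinimalRealExpansion) (m : ℕ)
    (G₁ : Subgroup (GL (Fin m) ℝ)) : Prop :=
  S.DefSet {x : Fin m × Fin m → ℝ | ∃ g : GL (Fin m) ℝ, g ∈ G₁ ∧
    ∀ p : Fin m × Fin m, (g : Matrix (Fin m) (Fin m) ℝ) p.1 p.2 = x p}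

/-- A topological group is Lie-isomorphic to a definably linear group if there are `m`, an
o-minimal expansion of the real ordered field, a subgroup `G₁` of `GL_m(ℝ)` which is a
definable subset of `M_m(ℝ)`, and a group isomorphism onto `G₁` that is a homeomorphism. -/
def IsLieIsomorphicToDefinablyLinearGroup (G : Type*) [Group G] [TopologicalSpace G] : Prop :=
  ∃ (m : ℕ) (S : OMinimalRealExpansion) (G₁ : Subgroup (GL (Fin m) ℝ)),
    IsDefinableSubgroupOfGL S m G₁ ∧ ∃ e : G ≃* G₁, Continuous e ∧ Continuous e.symm

namespace DefRep

/-- Matrices of size `d`. -/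
abbrev Mat (d : ℕ) := Matrix (Fin d) (Fin d) ℝ

/-- The matrix with given tuple of entries. -/
def mk {d : ℕ} (v : Fin d × Fin d → ℝ) : Mat d := fun i j => v (i, j)

/-- A function of matrices is continuous and definable. -/
def Good (St : OMinimalRealExpansion) {d : ℕ} (w : Mat d → ℝ) : Prop :=
  Continuous w ∧ @Set.DefinableFun ℝ St.L St.str (Fin d × Fin d) Set.univ (fun v => w (mk v))

lemma definableFun_two (St : OMinimalRealExpansion) {α : Type} (op : ℝ → ℝ → ℝ)
    (hop : @Set.Definable ℝ (∅ : Set ℝ) St.L St.str _ {x : Fin 3 → ℝ | op (x 0) (x 1) = x 2})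
    {f g : (α → ℝ) → ℝ}
    (hf : @Set.DefinableFun ℝ St.L St.str α Set.univ f)
    (hg : @Set.DefinableFun ℝ St.L St.str α Set.univ g) :
    @Set.DefinableFun ℝ St.L St.str α Set.univ (fun v => op (f v) (g v)) := by
  letI := St.str
  have h2 : Set.DefinableFun St.L (Set.univ : Set ℝ)
      (fun v : Fin 2 → ℝ => op (v 0) (v 1)) := by
    have h := (hop.mono (Set.empty_subset Set.univ)).preimage_comp
      (β := Option (Fin 2)) (![some 0, some 1, none] : Fin 3 → Option (Fin 2))
    exact h
  have hm : Set.DefinableMap St.L (Set.univ : Set ℝ) (fun v : α → ℝ => ![f v, g v]) := by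
    intro i
    fin_cases i
    · exact hf
    · exact hg
  exact Set.DefinableFun.comp hm h2

/-- The subalgebra of continuous definable functions. -/
def goodAlg (St : OMinimalRealExpansion) (d : ℕ) : Subalgebra ℝ (Mat d → ℝ) where
  carrier := {w | Good St w}
  mul_mem' ha hb := ⟨ha.1.mul hb.1, definableFun_two St (· * ·) St.definable_mul ha.2 hb.2⟩
  add_mem' ha hb := ⟨ha.1.add hb.1, definableFun_two St (· + ·) St.definable_add ha.2 hb.2⟩
  algebraMap_mem' r := ⟨continuous_const, by
    letI := St.str
    exact St.L.definableFun_const (A := Set.univ) (a := r) _ (Set.mem_univ _)⟩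

/-- Affine functions. -/
def affMap (d : ℕ) : (ℝ × Module.Dual ℝ (Mat d)) →ₗ[ℝ] (Mat d → ℝ) where
  toFun p := fun x => p.1 + p.2 x
  map_add' p q := by ext x; simp; ring
  map_smul' c p := by ext x; simp; ring

/-- The space of affine functions. -/
def aff (d : ℕ) : Submodule ℝ (Mat d → ℝ) := LinearMap.range (affMap d)

lemma aff_fg (d : ℕ) : (aff d).FG := by
  rw [aff, LinearMap.range_eq_map]
  exact Submodule.FG.map _ Module.Finite.fg_top

lemma aff_le_good (St : OMinimalRealExpansion) (d : ℕ) :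
    aff d ≤ Subalgebra.toSubmodule (goodAlg St d) := by
  rintro _ ⟨⟨c, l⟩, rfl⟩
  have h : affMap d (c, l) = algebraMap ℝ (Mat d → ℝ) c +
      ∑ i, ∑ j, (l (Matrix.single i j 1)) • (fun x : Mat d => x i j) := by
    ext x
    simp only [affMap, LinearMap.coe_mk, AddHom.coe_mk, Pi.add_apply, Finset.sum_apply,
      Pi.smul_apply, Pi.algebraMap_apply, Algebra.algebraMap_self, RingHom.id_apply, smul_eq_mul]
    congr 1
    conv_lhs => rw [Matrix.matrix_eq_sum_single x]
    simp only [map_sum]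
    refine Finset.sum_congr rfl fun i _ => Finset.sum_congr rfl fun j _ => ?_
    have : Matrix.single i j (x i j) = x i j • Matrix.single i j (1 : ℝ) := by simp
    rw [this, map_smul, smul_eq_mul, mul_comm]
  rw [h]
  refine Subalgebra.add_mem _ (Subalgebra.algebraMap_mem _ _) ?_
  refine Subalgebra.sum_mem _ fun i _ => Subalgebra.sum_mem _ fun j _ =>
    Subalgebra.smul_mem _ ?_ _
  refine ⟨by fun_prop, ?_⟩
  letI := St.str
  exact Set.DefinableFun.proj St.L (A := Set.univ) (i := (i, j))

lemma pow_le_alg {R A : Type*} [CommSemiring R] [Semiring A] [Algebra R A] (B : Subalgebra R A)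
    (M : Submodule R A) (h : M ≤ Subalgebra.toSubmodule B) (n : ℕ) :
    M ^ n ≤ Subalgebra.toSubmodule B := by
  induction n with
  | zero =>
    rw [pow_zero, Submodule.one_le]
    exact B.one_mem
  | succ n ih =>
    rw [pow_succ, Submodule.mul_le]
    intro a ha b hb
    exact B.mul_mem (ih ha) (h hb)

/-- Substitution of a linear map. -/
def subst {d : ℕ} (T : Mat d →ₗ[ℝ] Mat d) : (Mat d → ℝ) →ₐ[ℝ] (Mat d → ℝ) where
  toFun w := fun x => w (T x)
  map_one' := rfl
  map_mul' _ _ := rfl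
  map_zero' := rfl
  map_add' _ _ := rfl
  commutes' _ := rfl

lemma subst_pow {d : ℕ} (T : Mat d →ₗ[ℝ] Mat d) (n : ℕ) {w : Mat d → ℝ}
    (hw : w ∈ aff d ^ n) : (fun x => w (T x)) ∈ aff d ^ n := by
  have h1 : (aff d).map (subst T).toLinearMap ≤ aff d := by
    rintro _ ⟨_, ⟨⟨c, l⟩, rfl⟩, rfl⟩
    exact ⟨(c, l.comp T), rfl⟩
  have h2 := Submodule.map_pow (aff d) (subst T) n
  have h3 : subst T w ∈ ((aff d ^ n).map (subst T).toLinearMap) := ⟨w, hw, rfl⟩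
  rw [h2] at h3
  exact pow_le_pow_left' h1 n h3

lemma prod_mem_pow {R A ι : Type*} [CommSemiring R] [CommSemiring A] [Algebra R A]
    (M : Submodule R A) (s : Finset ι) (f : ι → A) (h : ∀ i, f i ∈ M) :
    ∏ i ∈ s, f i ∈ M ^ s.card := by
  classical
  induction s using Finset.induction with
  | empty => simp [Submodule.mem_one]; exact ⟨1, map_one _⟩
  | insert a s ha ih =>
    rw [Finset.prod_insert ha, Finset.card_insert_of_notMem ha, pow_succ']
    exact Submodule.mul_mem_mul (h a) ih

variable {d : ℕ} {G : Subgroup (GL (Fin d) ℝ)}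

/-- Underlying matrix. -/
def toM (G : Subgroup (GL (Fin d) ℝ)) : G →* Mat d := (Units.coeHom _).comp G.subtype

lemma toM_inj : Function.Injective (toM G) := by
  intro a b h
  exact Subtype.ext (Units.ext h)

lemma toM_cont : Continuous (toM G) := Units.continuous_val.comp continuous_subtype_val

/-- The invariant functions. -/
def W (F : Subgroup G) (n : ℕ) : Submodule ℝ (Mat d → ℝ) where
  carrier := {w | w ∈ aff d ^ n ∧ ∀ f ∈ F, ∀ x, w (x * toM G f) = w x}
  add_mem' ha hb := ⟨add_mem ha.1 hb.1, fun f hf x => by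
    simp [ha.2 f hf, hb.2 f hf]⟩
  zero_mem' := ⟨zero_mem _, fun _ _ _ => rfl⟩
  smul_mem' c w hw := ⟨Submodule.smul_mem _ c hw.1, fun f hf x => by simp [hw.2 f hf]⟩

lemma W_le (F : Subgroup G) (n : ℕ) : W F n ≤ aff d ^ n := fun _ h => h.1

instance (F : Subgroup G) (n : ℕ) : FiniteDimensional ℝ (W F n) := by
  have : FiniteDimensional ℝ (aff d ^ n : Submodule ℝ (Mat d → ℝ)) :=
    Module.Finite.iff_fg.mpr ((aff_fg d).pow n)
  exact Submodule.finiteDimensional_of_le (W_le F n)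

/-- The representation on invariant functions. -/
def rep (F : Subgroup G) (hF : F ≤ Subgroup.center G) (n : ℕ) :
    G →* Module.End ℝ (W F n) where
  toFun g :=
    { toFun := fun w => ⟨fun x => w.1 (x * toM G g),
        subst_pow (LinearMap.mulRight ℝ (toM G g)) n w.2.1, fun f hf x => by
          have hc : f * g = g * f := ((Subgroup.mem_center_iff.mp (hF hf)) g).symm
          change w.1 (x * toM G f * toM G g) = w.1 (x * toM G g)
          rw [mul_assoc, ← map_mul, hc, map_mul, ← mul_assoc, w.2.2 f hf]⟩
      map_add' := fun _ _ => rfl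
      map_smul' := fun _ _ => rfl }
  map_one' := by ext w x; simp
  map_mul' g h := by ext w x; simp [mul_assoc]

lemma rep_apply (F : Subgroup G) (hF : F ≤ Subgroup.center G) (n : ℕ) (g : G) (w : W F n)
    (x : Mat d) : (rep F hF n g w).1 x = w.1 (x * toM G g) := rfl

/-- Evaluation functional. -/
def ev (F : Subgroup G) (n : ℕ) (x : Mat d) : Module.Dual ℝ (W F n) :=
  (LinearMap.proj x).comp (W F n).subtype

lemma span_ev (F : Subgroup G) (n : ℕ) : Submodule.span ℝ (Set.range (ev F n)) = ⊤ := by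
  have h0 : (Submodule.span ℝ (Set.range (ev F n))).dualCoannihilator = ⊥ := by
    rw [eq_bot_iff]
    intro w hw
    rw [Submodule.mem_dualCoannihilator] at hw
    rw [Submodule.mem_bot]
    ext x
    exact hw (ev F n x) (Submodule.subset_span ⟨x, rfl⟩)
  have h1 := Subspace.dualCoannihilator_dualAnnihilator_eq
    (W := Submodule.span ℝ (Set.range (ev F n)))
  rw [← h1, h0, Submodule.dualAnnihilator_bot]

lemma coeff_good (St : OMinimalRealExpansion) (F : Subgroup G) (hF : F ≤ Subgroup.center G)
    (n : ℕ) (φ : Module.Dual ℝ (W F n)) (w : W F n) :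
    ∃ a : Mat d → ℝ, Good St a ∧ ∀ g : G, φ (rep F hF n g w) = a (toM G g) := by
  have hφ : φ ∈ Submodule.span ℝ (Set.range (ev F n)) := by rw [span_ev]; trivial
  induction hφ using Submodule.span_induction with
  | mem φ h =>
    obtain ⟨x, rfl⟩ := h
    exact ⟨fun y => w.1 (x * y), pow_le_alg (goodAlg St d) _ (aff_le_good St d) n
      (subst_pow (LinearMap.mulLeft ℝ x) n w.2.1), fun g => rfl⟩
  | zero => exact ⟨0, (goodAlg St d).zero_mem, fun g => rfl⟩
  | add φ ψ _ _ h1 h2 =>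
    obtain ⟨a, ha, ha'⟩ := h1
    obtain ⟨b, hb, hb'⟩ := h2
    exact ⟨a + b, (goodAlg St d).add_mem ha hb, fun g => by simp [ha', hb']⟩
  | smul c φ _ h1 =>
    obtain ⟨a, ha, ha'⟩ := h1
    exact ⟨c • a, (goodAlg St d).smul_mem ha c, fun g => by simp [ha']⟩

lemma rep_ker (F : Subgroup G) (hF : F ≤ Subgroup.center G) [Finite F] :
    ∃ n, ∀ g : G, rep F hF n g = 1 ↔ g ∈ F := by
  classical
  have := Fintype.ofFinite F
  let q : F → Mat d → ℝ := fun f x =>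
    ∑ i, ∑ j, ((x * toM G f) i j - (1 : Mat d) i j) ^ 2
  have hq : ∀ f, q f ∈ aff d ^ 2 := by
    intro f
    have : q f = ∑ i, ∑ j, (fun x : Mat d => (x * toM G f) i j - (1 : Mat d) i j) ^ 2 := by
      ext x; simp [q]
    rw [this]
    refine Submodule.sum_mem _ fun i _ => Submodule.sum_mem _ fun j _ => ?_
    refine Submodule.pow_mem_pow _ ?_ 2
    refine ⟨(-(1 : Mat d) i j,
      (Matrix.entryLinearMap ℝ ℝ i j).comp (LinearMap.mulRight ℝ (toM G f))), ?_⟩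
    ext x
    simp [affMap]
    ring
  have hq0 : ∀ f x, q f x = 0 ↔ x * toM G f = 1 := by
    intro f x
    simp only [q]
    rw [Finset.sum_eq_zero_iff_of_nonneg
      (fun i _ => Finset.sum_nonneg fun j _ => sq_nonneg _)]
    constructor
    · intro h
      ext i j
      have h1 := (Finset.sum_eq_zero_iff_of_nonneg (fun j _ => sq_nonneg _)).mp
        (h i (Finset.mem_univ _)) j (Finset.mem_univ _)
      exact sub_eq_zero.mp (pow_eq_zero_iff (two_ne_zero) |>.mp h1)
    · intro h i _
      simp [h]
  let p : Mat d → ℝ := ∏ f : F, q f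
  have hp : p ∈ W F (2 * (Finset.univ : Finset F).card) := by
    refine ⟨?_, ?_⟩
    · rw [pow_mul]
      exact prod_mem_pow _ _ _ hq
    · intro f hf x
      simp only [p, Finset.prod_apply]
      refine Fintype.prod_equiv (Equiv.mulLeft (⟨f, hf⟩ : F)) _ _ fun f' => ?_
      simp [q, mul_assoc]
  refine ⟨2 * (Finset.univ : Finset F).card, fun g => ⟨fun h => ?_, fun h => ?_⟩⟩
  · have h1 := congrFun (congrArg Subtype.val (LinearMap.congr_fun h ⟨p, hp⟩)) 1
    rw [rep_apply] at h1
    have h2 : p (1 * toM G g) = p 1 := h1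
    have h3 : p 1 = 0 := by
      simp only [p, Finset.prod_apply]
      exact Finset.prod_eq_zero (Finset.mem_univ 1) ((hq0 _ _).mpr (by simp))
    rw [h3] at h2
    simp only [p, Finset.prod_apply] at h2
    obtain ⟨f, -, hf⟩ := Finset.prod_eq_zero_iff.mp h2
    rw [hq0, one_mul, ← map_mul, ← map_one (toM G)] at hf
    have h4 : g = (f : G)⁻¹ := eq_inv_of_mul_eq_one_left (toM_inj hf)
    rw [h4]
    exact F.inv_mem f.2
  · ext w x
    exact w.2.2 g h x

end DefRep

/-- Let `G ⊆ GL(V)` be a subgroup which is a definable subset of `End(V)`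
(identifying `V` with `ℝᵈ` and `End(V)` with `M_d(ℝ)`), and let `F` be a finite central
subgroup of `G`.  Then there is a continuous definable representation `σ` of `G` on a
finite-dimensional real vector space whose kernel is exactly `F`; in particular `G/F` is
topologically isomorphic to the definably linear group `σ(G)`. -/
theorem definable_rep_with_kernel_finite_central
    (St : OMinimalRealExpansion) (d : ℕ) (G : Subgroup (GL (Fin d) ℝ))
    (hGdef : IsDefinableSubgroupOfGL St d G)
    (F : Subgroup G) (hFfin : Finite F) (hFcentral : F ≤ Subgroup.center G) :
    ∃ (e : ℕ) (σ : G →* GL (Fin e) ℝ), Continuous σ ∧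
      St.DefSet {x : (Fin d × Fin d) ⊕ (Fin e × Fin e) → ℝ | ∃ g : G,
        (∀ p : Fin d × Fin d,
          ((g : GL (Fin d) ℝ) : Matrix (Fin d) (Fin d) ℝ) p.1 p.2 = x (Sum.inl p)) ∧
        ∀ q : Fin e × Fin e,
          ((σ g : Matrix (Fin e) (Fin e) ℝ) q.1 q.2 = x (Sum.inr q))} ∧
      σ.ker = F := by
  classical
  obtain ⟨n, hn⟩ := DefRep.rep_ker F hFcentral
  let b := Module.finBasis ℝ (DefRep.W F n)
  let τ : G →* Matrix (Fin (Module.finrank ℝ (DefRep.W F n)))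
      (Fin (Module.finrank ℝ (DefRep.W F n))) ℝ :=
    ((LinearMap.toMatrixAlgEquiv b : _ →* _)).comp (DefRep.rep F hFcentral n)
  have hτ : ∀ g i j, τ g i j = b.coord i (DefRep.rep F hFcentral n g (b j)) := by
    intro g i j
    exact LinearMap.toMatrixAlgEquiv_apply b _ i j
  choose a ha ha' using fun q : Fin (Module.finrank ℝ (DefRep.W F n)) ×
      Fin (Module.finrank ℝ (DefRep.W F n)) =>
    DefRep.coeff_good St F hFcentral n (b.coord q.1) (b q.2)
  have hτa : ∀ g i j, τ g i j = a (i, j) (DefRep.toM G g) := fun g i j => by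
    rw [hτ, ha' (i, j)]
  have hτc : Continuous τ := by
    refine continuous_matrix fun i j => ?_
    simp only [hτa]
    exact (ha (i, j)).1.comp DefRep.toM_cont
  refine ⟨_, τ.toHomUnits, ?_, ?_, ?_⟩
  · rw [Units.continuous_iff]
    refine ⟨hτc, ?_⟩
    have : (fun g : G => ((τ.toHomUnits g)⁻¹ : (Matrix _ _ ℝ)ˣ).val) = fun g => τ g⁻¹ := by
      ext1 g
      rw [← map_inv]
      rfl
    exact this ▸ hτc.comp continuous_inv
  · letI := St.str
    have h1 := Set.Definable.preimage_comp
      (Sum.inl : _ → (Fin d × Fin d) ⊕ (Fin (Module.finrank ℝ (DefRep.W F n)) ×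
        Fin (Module.finrank ℝ (DefRep.W F n)))) hGdef
    have h2 : ∀ q, Set.Definable Set.univ St.L
        {x : (Fin d × Fin d) ⊕ (Fin (Module.finrank ℝ (DefRep.W F n)) ×
          Fin (Module.finrank ℝ (DefRep.W F n))) → ℝ |
          a q (DefRep.mk (x ∘ Sum.inl)) = x (Sum.inr q)} := by
      intro q
      refine Set.DefinableFun.ofPred_eq ?_ (Set.DefinableFun.proj St.L)
      exact Set.DefinableFun.comp (g := fun x => x ∘ Sum.inl)
        (fun i => (Set.DefinableFun.proj St.L)) (ha q).2
    have h3 := h1.inter (Set.definable_iInter_of_finite h2)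
    unfold OMinimalRealExpansion.DefSet
    convert h3 using 1
    ext x
    simp only [Set.mem_inter_iff, Set.mem_iInter, Set.mem_preimage, Set.mem_ofPred_eq]
    have key : ∀ g : G, (∀ p : Fin d × Fin d,
          ((g : GL (Fin d) ℝ) : Matrix (Fin d) (Fin d) ℝ) p.1 p.2 = x (Sum.inl p)) →
        DefRep.toM G g = DefRep.mk (x ∘ Sum.inl) := by
      intro g hg
      ext i j
      exact hg (i, j)
    constructor
    · rintro ⟨g, hg, hq⟩
      refine ⟨⟨g, g.2, hg⟩, fun q => ?_⟩
      rw [← key g hg, ← hq q]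
      exact (hτa g q.1 q.2).symm
    · rintro ⟨⟨g, hgG, hg⟩, hq⟩
      refine ⟨⟨g, hgG⟩, hg, fun q => ?_⟩
      rw [← hq q, ← key ⟨g, hgG⟩ hg]
      exact hτa ⟨g, hgG⟩ q.1 q.2
  · ext g
    rw [MonoidHom.mem_ker, ← hn g, Units.ext_iff]
    change LinearMap.toMatrixAlgEquiv b (DefRep.rep F hFcentral n g) = 1 ↔ _
    rw [← map_one (LinearMap.toMatrixAlgEquiv b)]
    exact (LinearMap.toMatrixAlgEquiv b).injective.eq_iff
end
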